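/- arXiv:1505.00283 — 2 statements merged into one kernel-verified Lean document; each statement's English description precedes it below -/
import Mathlib

section
/- Let d be a prime, and let S be an abelian subgroup of the Pauli group G_d^n with no nontrivial scalars, generated by elements s_1, …, s_r that are independent in the sense that no s_i belongs to the subgroup generated by the remaining generators. Then Nat.card S = d^r, and consequently the fixed subspace Fix(S) has complex dimension 1 if and only if r = n. -/
open Matrix

noncomputable def q (d : ℕ) : ℂ := Complex.exp (2 * Real.pi * Complex.I / d)

/-- Dot product of two vectors over `ZMod d`. -/
def dotp {n d : ℕ} (A B : Fin n → ZMod d) : ZMod d := ∑ i, A i * B i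

/-- The Pauli word `W(U,V)` with entries `q^{⟨U,J⟩}` at `(J, K)` when `J = K + V`. -/
noncomputable def PauliWord (d n : ℕ) (U V : Fin n → ZMod d) :
    Matrix (Fin n → ZMod d) (Fin n → ZMod d) ℂ :=
  Matrix.of fun J K => if J = K + V then q d ^ (dotp U J).val else 0

/-- The n-qudit Pauli group, as a set of matrices. -/
noncomputable def PauliSet (d n : ℕ) : Set (Matrix (Fin n → ZMod d) (Fin n → ZMod d) ℂ) :=
  {g | ∃ (k : ZMod d) (U V : Fin n → ZMod d), g = q d ^ k.val • PauliWord d n U V}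

/-- The subspace of states fixed by every matrix in `S`. -/
noncomputable def FixSubspace (d n : ℕ) [NeZero d]
    (S : Set (Matrix (Fin n → ZMod d) (Fin n → ZMod d) ℂ)) :
    Submodule ℂ ((Fin n → ZMod d) → ℂ) where
  carrier := {ψ | ∀ s ∈ S, s.mulVec ψ = ψ}
  add_mem' := by
    intro a b ha hb s hs
    simp [Matrix.mulVec_add, ha s hs, hb s hs]
  zero_mem' := by
    intro s hs
    simp [Matrix.mulVec_zero]
  smul_mem' := by
    intro c a ha s hs
    simp [Matrix.mulVec_smul, ha s hs]


theorem card_of_indep_vec {A V : Type*} [Monoid A] [AddCommGroup V] (d r : ℕ) [Fact d.Prime]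
    [Module (ZMod d) V] (φ : V → A) (h0 : φ 0 = 1) (hadd : ∀ x y, φ (x + y) = φ x * φ y)
    (v : Fin r → V)
    (hind : ∀ i : Fin r, φ (v i) ∉ Submonoid.closure {x | ∃ j : Fin r, j ≠ i ∧ x = φ (v j)})
    (hinj : Function.Injective φ)
    (hcl : ∀ x, φ x ∈ Submonoid.closure (Set.range fun i => φ (v i))) :
    Nat.card V = d ^ r := by
  have hex : ∀ a ∈ Submonoid.closure (Set.range fun i => φ (v i)),
      ∃ x ∈ Submodule.span (ZMod d) (Set.range v), φ x = a := by
    intro a ha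
    induction ha using Submonoid.closure_induction with
    | mem x h =>
      obtain ⟨i, rfl⟩ := h
      exact ⟨v i, Submodule.subset_span ⟨i, rfl⟩, rfl⟩
    | one => exact ⟨0, Submodule.zero_mem _, h0⟩
    | mul a b _ _ h1 h2 =>
      obtain ⟨x, hx, rfl⟩ := h1
      obtain ⟨y, hy, rfl⟩ := h2
      exact ⟨x + y, Submodule.add_mem _ hx hy, hadd x y⟩
  have hsp : ⊤ ≤ Submodule.span (ZMod d) (Set.range v) := by
    intro x _
    obtain ⟨y, hy, h⟩ := hex _ (hcl x)
    rwa [← hinj h]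
  have hns : ∀ (m : ℕ) (x : V), φ (m • x) = φ x ^ m := by
    intro m x
    induction m with
    | zero => simp [h0]
    | succ m ih => rw [succ_nsmul, hadd, ih, pow_succ]
  have hsm : ∀ (c : ZMod d) (x : V), c • x = c.val • x := by
    intro c x
    rw [← Nat.cast_smul_eq_nsmul (ZMod d), ZMod.natCast_zmod_val]
  have key : ∀ (T : Set V) (x : V), x ∈ Submodule.span (ZMod d) T →
      φ x ∈ Submonoid.closure (φ '' T) := by
    intro T x hx
    induction hx using Submodule.span_induction with
    | mem x h => exact Submonoid.subset_closure ⟨x, h, rfl⟩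
    | zero => rw [h0]; exact Submonoid.one_mem _
    | add x y _ _ hx hy => rw [hadd]; exact Submonoid.mul_mem _ hx hy
    | smul c x _ hx =>
      rw [hsm, hns]
      exact Submonoid.pow_mem _ hx _
  have hli : LinearIndependent (ZMod d) v := by
    rw [linearIndependent_iff_notMem_span]
    intro i hi
    apply hind i
    refine Submonoid.closure_mono ?_ (key _ _ hi)
    rintro _ ⟨_, ⟨j, hj, rfl⟩, rfl⟩
    exact ⟨j, by simpa using hj, rfl⟩
  let b := Module.Basis.mk hli hsp
  have : Module.Finite (ZMod d) V := Module.Finite.of_basis b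
  have h := Module.natCard_eq_pow_finrank (K := ZMod d) (V := V)
  rw [Module.finrank_eq_card_basis b, Nat.card_zmod, Fintype.card_fin] at h
  exact h

theorem card_closure_of_indep {A : Type*} [Monoid A] (d r : ℕ) (hdp : d.Prime)
    (s : Fin r → A)
    (hcomm : ∀ a ∈ Submonoid.closure (Set.range s), ∀ b ∈ Submonoid.closure (Set.range s),
      a * b = b * a)
    (hpow : ∀ a ∈ Submonoid.closure (Set.range s), a ^ d = 1)
    (hind : ∀ i : Fin r, s i ∉ Submonoid.closure {x | ∃ j : Fin r, j ≠ i ∧ x = s j}) :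
    Nat.card (Submonoid.closure (Set.range s)) = d ^ r := by
  have : Fact d.Prime := ⟨hdp⟩
  let M := Submonoid.closure (Set.range s)
  let i1 : CommGroup M :=
    { (inferInstance : Monoid M) with
      inv := fun a => a ^ (d - 1)
      inv_mul_cancel := by
        intro a
        change a ^ (d - 1) * a = 1
        rw [← pow_succ, Nat.sub_add_cancel hdp.one_le]
        exact Subtype.ext (hpow a a.2)
      mul_comm := fun a b => Subtype.ext (hcomm a a.2 b b.2) }
  let i2 : AddCommGroup (Additive M) := @Additive.addCommGroup M i1
  let i3 : Module (ZMod d) (Additive M) := AddCommGroup.zmodModule (n := d) (by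
    intro x
    apply Additive.toMul.injective
    exact Subtype.ext (hpow x.toMul x.toMul.2))
  let v : Fin r → Additive M := fun i =>
    Additive.ofMul ⟨s i, Submonoid.subset_closure ⟨i, rfl⟩⟩
  refine @card_of_indep_vec A (Additive M) _ i2 d r _ i3 (fun x => (x.toMul : A)) rfl
    (fun _ _ => rfl) v hind ?_ ?_
  · intro x y h
    exact Additive.toMul.injective (Subtype.ext h)
  · intro x
    exact x.toMul.2

theorem q_pow_val (d : ℕ) [NeZero d] (x : ZMod d) :
    q d ^ x.val = ZMod.stdAddChar x := by
  rw [ZMod.stdAddChar_apply, ZMod.toCircle_apply, q, ← Complex.exp_nat_mul]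
  congr 1
  ring

theorem pauliWord_apply (d n : ℕ) [NeZero d] (U V J K : Fin n → ZMod d) :
    PauliWord d n U V J K = if J = K + V then ZMod.stdAddChar (dotp U J) else 0 := by
  simp [PauliWord, q_pow_val]

theorem pauliWord_zero (d n : ℕ) [NeZero d] : PauliWord d n 0 0 = 1 := by
  ext J K
  simp [pauliWord_apply, Matrix.one_apply, dotp]

theorem pauliWord_mul (d n : ℕ) [NeZero d] (U V U' V' : Fin n → ZMod d) :
    PauliWord d n U V * PauliWord d n U' V' =
      (ZMod.stdAddChar (-(dotp U' V)) : ℂ) • PauliWord d n (U + U') (V + V') := by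
  ext J L
  rw [Matrix.mul_apply, Matrix.smul_apply, Finset.sum_eq_single (J - V)]
  · simp only [pauliWord_apply, sub_add_cancel, if_true, smul_eq_mul]
    have : (J - V = L + V') ↔ (J = L + (V + V')) := by
      rw [sub_eq_iff_eq_add, add_assoc, add_comm V' V]
    simp only [this]
    split_ifs
    · rw [← AddChar.map_add_eq_mul, ← AddChar.map_add_eq_mul]
      congr 1
      simp only [dotp, Pi.add_apply, Pi.sub_apply, ← Finset.sum_add_distrib,
        ← Finset.sum_neg_distrib]
      apply Finset.sum_congr rfl
      intro i _
      ring
    · simp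
  · intro K _ hK
    rw [pauliWord_apply, if_neg, zero_mul]
    rintro rfl
    simp at hK
  · simp

theorem pauli_pow (d n : ℕ) [NeZero d] (c : ℂ) (U V : Fin n → ZMod d) (m : ℕ) :
    ∃ c' : ℂ, (c • PauliWord d n U V) ^ m = c' • PauliWord d n (m • U) (m • V) := by
  induction m with
  | zero => exact ⟨1, by simp [pauliWord_zero]⟩
  | succ m ih =>
    obtain ⟨c', h⟩ := ih
    rw [pow_succ, h, Matrix.smul_mul, Matrix.mul_smul, pauliWord_mul, smul_smul, smul_smul,
      succ_nsmul, succ_nsmul]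
    exact ⟨_, rfl⟩

theorem pauli_pow_d (d n : ℕ) [NeZero d] (g : Matrix (Fin n → ZMod d) (Fin n → ZMod d) ℂ)
    (hg : g ∈ PauliSet d n) : ∃ c : ℂ, g ^ d = c • 1 := by
  obtain ⟨k, U, V, rfl⟩ := hg
  obtain ⟨c, h⟩ := pauli_pow d n (q d ^ k.val) U V d
  refine ⟨c, ?_⟩
  have h0 : ∀ X : Fin n → ZMod d, d • X = 0 := by
    intro X
    ext i
    simp
  rw [h, h0, h0, pauliWord_zero]

theorem pauli_trace (d n : ℕ) [NeZero d] (g : Matrix (Fin n → ZMod d) (Fin n → ZMod d) ℂ)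
    (hg : g ∈ PauliSet d n) : g.trace = 0 ∨ ∃ c : ℂ, g = c • 1 := by
  obtain ⟨k, U, V, rfl⟩ := hg
  by_cases hV : V = 0
  · subst hV
    by_cases hU : U = 0
    · subst hU
      right
      exact ⟨_, by rw [pauliWord_zero]⟩
    · left
      rw [Matrix.trace_smul]
      let φ : (Fin n → ZMod d) →+ ZMod d :=
        { toFun := dotp U
          map_zero' := by simp [dotp]
          map_add' := by intro a b; simp [dotp, mul_add, Finset.sum_add_distrib] }
      let ψ : AddChar (Fin n → ZMod d) ℂ := (ZMod.stdAddChar (N := d)).compAddMonoidHom φ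
      have hψ : ψ ≠ 1 := by
        intro h
        apply hU
        ext i
        have h1 : ψ (Pi.single i 1) = 1 := by rw [h]; rfl
        have h2 : (ZMod.stdAddChar (dotp U (Pi.single i 1)) : ℂ) = 1 := h1
        rw [← AddChar.map_zero_eq_one (ZMod.stdAddChar (N := d))] at h2
        have h3 := ZMod.injective_stdAddChar h2
        simpa [dotp, Pi.single_apply] using h3
      have := AddChar.sum_eq_zero_of_ne_one hψ
      have h4 : (PauliWord d n U 0).trace = ∑ a, ψ a := by
        simp only [Matrix.trace, Matrix.diag_apply, pauliWord_apply, add_zero, if_true]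
        rfl
      rw [h4, this, smul_zero]
  · left
    rw [Matrix.trace_smul]
    have : (PauliWord d n U V).trace = 0 := by
      simp [Matrix.trace, Matrix.diag_apply, pauliWord_apply, hV]
    rw [this, smul_zero]

theorem finrank_fix_mul_card {ι : Type} [Fintype ι] [DecidableEq ι]
    (M : Submonoid (Matrix ι ι ℂ)) [Finite M]
    (hinv : ∀ a ∈ M, ∃ b ∈ M, a * b = 1)
    (htr : ∀ a ∈ M, a ≠ 1 → a.trace = 0)
    (F : Submodule ℂ (ι → ℂ)) (hF : ∀ ψ, ψ ∈ F ↔ ∀ a ∈ M, a.mulVec ψ = ψ) :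
    Module.finrank ℂ F * Nat.card M = Fintype.card ι := by
  classical
  choose f hf hf' using hinv
  letI : Group M :=
    { (inferInstance : Monoid M) with
      inv := fun a => ⟨f a a.2, hf a a.2⟩
      inv_mul_cancel := by
        intro a
        exact Subtype.ext (mul_eq_one_comm.mp (hf' a a.2)) }
  letI := Fintype.ofFinite M
  let ρ : Representation ℂ M (ι → ℂ) :=
    { toFun := fun a => Matrix.toLin' (a : Matrix ι ι ℂ)
      map_one' := Matrix.toLin'_one
      map_mul' := fun a b => Matrix.toLin'_mul _ _ }
  have hne : (Fintype.card M : ℂ) ≠ 0 := by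
    exact_mod_cast Fintype.card_ne_zero
  letI : Invertible (Fintype.card M : ℂ) := invertibleOfNonzero hne
  have h := ρ.isProj_averageMap.trace
  have hFi : ρ.invariants = F := by
    ext ψ
    rw [hF, Representation.mem_invariants]
    exact ⟨fun h a ha => by simpa [ρ] using h ⟨a, ha⟩, fun h a => by simpa [ρ] using h a a.2⟩
  rw [hFi] at h
  have h2 : ρ.averageMap = ⅟(Fintype.card M : ℂ) • ∑ g : M, ρ g := by
    simp [Representation.averageMap, GroupAlgebra.average]
  have h3 : ∑ g : M, LinearMap.trace ℂ (ι → ℂ) (ρ g) = Fintype.card ι := by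
    rw [Finset.sum_eq_single 1]
    · simp
    · intro g _ hg
      change LinearMap.trace ℂ (ι → ℂ) (Matrix.toLin' (g : Matrix ι ι ℂ)) = 0
      rw [Matrix.trace_toLin'_eq]
      exact htr g g.2 (fun h => hg (Subtype.ext h))
    · simp
  rw [h2, map_smul, map_sum, h3, smul_eq_mul, invOf_eq_inv] at h
  rw [Nat.card_eq_fintype_card]
  have : (Module.finrank ℂ F : ℂ) * Fintype.card M = Fintype.card ι := by
    rw [← h]
    field_simp
  exact_mod_cast this

theorem card_prime_generated_and_unique_state (d n r : ℕ) [NeZero d]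
    (hd : 2 ≤ d) (hdp : d.Prime) (hn : 1 ≤ n)
    (S : Set (Matrix (Fin n → ZMod d) (Fin n → ZMod d) ℂ))
    (hSsub : S ⊆ PauliSet d n)
    (hS1 : (1 : Matrix (Fin n → ZMod d) (Fin n → ZMod d) ℂ) ∈ S)
    (hSmul : ∀ a ∈ S, ∀ b ∈ S, a * b ∈ S)
    (hSinv : ∀ a ∈ S, ∃ b ∈ S, a * b = 1)
    (hScomm : ∀ a ∈ S, ∀ b ∈ S, a * b = b * a)
    (hSscal : ∀ c : ℂ, c • (1 : Matrix (Fin n → ZMod d) (Fin n → ZMod d) ℂ) ∈ S →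
      c • (1 : Matrix (Fin n → ZMod d) (Fin n → ZMod d) ℂ) = 1)
    (s : Fin r → Matrix (Fin n → ZMod d) (Fin n → ZMod d) ℂ)
    (hgen : S = (Submonoid.closure (Set.range s) : Set _))
    (hind : ∀ i : Fin r, s i ∉ Submonoid.closure {x | ∃ j : Fin r, j ≠ i ∧ x = s j}) :
    Nat.card S = d ^ r ∧
    (Module.finrank ℂ (FixSubspace d n S) = 1 ↔ r = n) := by
  have hpow : ∀ a ∈ Submonoid.closure (Set.range s), a ^ d = 1 := by
    intro a ha
    have haS : a ∈ S := by rw [hgen]; exact ha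
    obtain ⟨c, hc⟩ := pauli_pow_d d n a (hSsub haS)
    have h2 : a ^ d ∈ S := by rw [hgen]; exact Submonoid.pow_mem _ ha _
    rw [hc] at h2 ⊢
    exact hSscal c h2
  have hcard : Nat.card (Submonoid.closure (Set.range s)) = d ^ r := by
    apply card_closure_of_indep d r hdp s _ hpow hind
    intro a ha b hb
    exact hScomm a (by rw [hgen]; exact ha) b (by rw [hgen]; exact hb)
  have hcS : Nat.card S = d ^ r := by
    rw [hgen]
    exact hcard
  refine ⟨hcS, ?_⟩
  haveI : Finite (Submonoid.closure (Set.range s)) :=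
    Nat.finite_of_card_ne_zero (by rw [hcard]; exact pow_ne_zero _ hdp.ne_zero)
  have hmem : ∀ a, a ∈ S ↔ a ∈ Submonoid.closure (Set.range s) := by
    intro a
    rw [hgen]
    rfl
  have hfin := finrank_fix_mul_card (Submonoid.closure (Set.range s))
    (by
      intro a ha
      obtain ⟨b, hb, h⟩ := hSinv a ((hmem a).2 ha)
      exact ⟨b, (hmem b).1 hb, h⟩)
    (by
      intro a ha hne
      rcases pauli_trace d n a (hSsub ((hmem a).2 ha)) with h | ⟨c, rfl⟩
      · exact h
      · exact absurd (hSscal c ((hmem _).2 ha)) hne)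
    (FixSubspace d n S)
    (by
      intro ψ
      change (∀ a ∈ S, a.mulVec ψ = ψ) ↔ _
      simp only [hmem])
  rw [hcard] at hfin
  have hci : Fintype.card (Fin n → ZMod d) = d ^ n := by simp [ZMod.card]
  rw [hci] at hfin
  constructor
  · intro h
    rw [h, one_mul] at hfin
    exact Nat.pow_right_injective hd hfin
  · rintro rfl
    exact Nat.eq_of_mul_eq_mul_right (pow_pos hdp.pos r) (by rw [hfin, one_mul])
end

section
/- Let S be an abelian subgroup of the Pauli group G_d^n with no nontrivial scalars. Then the restriction of R to S is injective, its image R(S) ⊆ (Fin n → ZMod d) × (Fin n → ZMod d) is a ZMod d-submodule, and Nat.card S = Nat.card R(S). -/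
open Matrix

theorem q_pow_d (d : ℕ) [NeZero d] : q d ^ d = 1 := by
  have h : (d : ℂ) ≠ 0 := by exact_mod_cast NeZero.ne d
  rw [q, ← Complex.exp_nat_mul, mul_div_cancel₀ _ h]
  exact Complex.exp_two_pi_mul_I

theorem q_ne_zero (d : ℕ) : q d ≠ 0 := Complex.exp_ne_zero _

theorem q_val_add (d : ℕ) [NeZero d] (a b : ZMod d) :
    q d ^ (a + b).val = q d ^ a.val * q d ^ b.val := by
  rw [ZMod.val_add, ← pow_add]
  conv_rhs => rw [← Nat.div_add_mod (a.val + b.val) d, pow_add, pow_mul, q_pow_d, one_pow, one_mul]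

theorem PauliWord_mul (d n : ℕ) [NeZero d] (U V U' V' : Fin n → ZMod d) :
    PauliWord d n U V * PauliWord d n U' V' =
      q d ^ (-(dotp U' V)).val • PauliWord d n (U + U') (V + V') := by
  ext J K
  rw [Matrix.mul_apply, Finset.sum_eq_single (J - V)]
  · by_cases h : J = K + (V + V')
    · have h2 : J - V = K + V' := by rw [h]; abel
      have h3 : dotp U J + dotp U' (J - V) = -(dotp U' V) + dotp (U + U') J := by
        simp only [dotp, ← Finset.sum_neg_distrib, ← Finset.sum_add_distrib]
        refine Finset.sum_congr rfl fun i _ => ?_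
        simp only [Pi.add_apply, Pi.sub_apply]
        ring
      simp only [PauliWord, Matrix.of_apply, Matrix.smul_apply, smul_eq_mul, sub_add_cancel,
        if_true]
      rw [if_pos h2, if_pos h, ← q_val_add, ← q_val_add, h3]
    · have h2 : ¬ (J - V = K + V') := by
        intro h2
        apply h
        rw [← sub_add_cancel J V, h2]; abel
      simp [PauliWord, h, h2]
  · intro L _ hL
    have : ¬ (J = L + V) := by
      intro h
      apply hL
      rw [h, add_sub_cancel_right]
    simp [PauliWord, this]
  · simp

theorem one_eq_PauliWord (d n : ℕ) [NeZero d] :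
    (1 : Matrix (Fin n → ZMod d) (Fin n → ZMod d) ℂ) =
      q d ^ (0 : ZMod d).val • PauliWord d n 0 0 := by
  ext J K
  simp [PauliWord, Matrix.one_apply, dotp]

theorem R_injOn_image_submodule (d n : ℕ) [NeZero d] (hd : 2 ≤ d) (hn : 1 ≤ n)
    (Rmap : Matrix (Fin n → ZMod d) (Fin n → ZMod d) ℂ →
      (Fin n → ZMod d) × (Fin n → ZMod d))
    (hR : ∀ (k : ZMod d) (U V : Fin n → ZMod d),
      Rmap (q d ^ k.val • PauliWord d n U V) = (U, V))
    (S : Set (Matrix (Fin n → ZMod d) (Fin n → ZMod d) ℂ))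
    (hSsub : S ⊆ PauliSet d n)
    (hS1 : (1 : Matrix (Fin n → ZMod d) (Fin n → ZMod d) ℂ) ∈ S)
    (hSmul : ∀ a ∈ S, ∀ b ∈ S, a * b ∈ S)
    (hSinv : ∀ a ∈ S, ∃ b ∈ S, a * b = 1)
    (hScomm : ∀ a ∈ S, ∀ b ∈ S, a * b = b * a)
    (hSscal : ∀ c : ℂ, c • (1 : Matrix (Fin n → ZMod d) (Fin n → ZMod d) ℂ) ∈ S →
      c • (1 : Matrix (Fin n → ZMod d) (Fin n → ZMod d) ℂ) = 1)
    :
    Set.InjOn Rmap S ∧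
    (∃ N : Submodule (ZMod d) ((Fin n → ZMod d) × (Fin n → ZMod d)),
      (N : Set ((Fin n → ZMod d) × (Fin n → ZMod d))) = Rmap '' S) ∧
    Nat.card S = Nat.card (Rmap '' S) := by
  have hinj : Set.InjOn Rmap S := by
    intro a ha b hb hab
    obtain ⟨k, U, V, rfl⟩ := hSsub ha
    obtain ⟨l, U', V', rfl⟩ := hSsub hb
    rw [hR, hR, Prod.mk.injEq] at hab
    obtain ⟨rfl, rfl⟩ := hab
    obtain ⟨c, hc, hac⟩ := hSinv _ ha
    have hb2 : q d ^ l.val • PauliWord d n U V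
        = q d ^ (l - k).val • (q d ^ k.val • PauliWord d n U V) := by
      rw [smul_smul, ← q_val_add, sub_add_cancel]
    have h := hSmul _ hb _ hc
    rw [hb2, smul_mul_assoc, hac] at h
    have h1 := hSscal _ h
    rw [hb2, ← one_mul (q d ^ k.val • PauliWord d n U V), ← smul_mul_assoc, h1]
  have hadd : ∀ x ∈ Rmap '' S, ∀ y ∈ Rmap '' S, x + y ∈ Rmap '' S := by
    rintro _ ⟨a, ha, rfl⟩ _ ⟨b, hb, rfl⟩
    refine ⟨a * b, hSmul _ ha _ hb, ?_⟩
    obtain ⟨k, U, V, rfl⟩ := hSsub ha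
    obtain ⟨l, U', V', rfl⟩ := hSsub hb
    rw [smul_mul_smul_comm, PauliWord_mul, smul_smul, ← q_val_add, ← q_val_add, hR, hR, hR]
    rfl
  have hzero : (0 : (Fin n → ZMod d) × (Fin n → ZMod d)) ∈ Rmap '' S := by
    refine ⟨1, hS1, ?_⟩
    rw [one_eq_PauliWord, hR]
    rfl
  refine ⟨hinj, ⟨{ carrier := Rmap '' S
                   add_mem' := fun {x y} hx hy => hadd x hx y hy
                   zero_mem' := hzero
                   smul_mem' := ?_ }, rfl⟩, (Nat.card_image_of_injOn hinj).symm⟩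
  intro c x hx
  have hnat : ∀ m : ℕ, m • x ∈ Rmap '' S := by
    intro m
    induction m with
    | zero => rw [zero_smul]; exact hzero
    | succ m ih => rw [succ_nsmul]; exact hadd _ ih _ hx
  have := hnat c.val
  rwa [← Nat.cast_smul_eq_nsmul (ZMod d), ZMod.natCast_zmod_val] at this
end
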